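/- arXiv:2404.16615 — 4 statements merged into one kernel-verified Lean document; each statement's English description precedes it below -/
import Mathlib

section
/- Let μ be a nonzero, σ-finite, nonnegative Borel measure on (0,∞) such that ∫ exp(−ε·θ²/2) μ(dθ) < ∞ for every ε > 0, and let b : (0,∞) → ℝ satisfy r_μ(t, b(t)) = 1 for every t ∈ (0,∞). Then b is real-analytic on (0,∞). -/
open MeasureTheory Set Filter
open scoped ENNReal NNReal Topology

noncomputable def rTheta (θ t x : ℝ) : ℝ := Real.exp (-θ ^ 2 / (2 * t) + θ * x / t)

noncomputable def rMu (μ : Measure ℝ) (t x : ℝ) : ℝ≥0∞ :=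
  ∫⁻ θ, ENNReal.ofReal (rTheta θ t x) ∂μ

noncomputable def kerC (p : ℂ × ℂ) (θ : ℝ) : ℂ :=
  Complex.exp (-(p.1 * (θ : ℂ) ^ 2) / 2 + (θ : ℂ) * p.2)

noncomputable def kerD (p : ℂ × ℂ) (θ : ℝ) : (ℂ × ℂ) →L[ℂ] ℂ :=
  kerC p θ • ((-((θ : ℂ) ^ 2) / 2) • ContinuousLinearMap.fst ℂ ℂ ℂ +
    (θ : ℂ) • ContinuousLinearMap.snd ℂ ℂ ℂ)

noncomputable def kerR (s y θ : ℝ) : ℝ := Real.exp (-(s * θ ^ 2) / 2 + θ * y)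

lemma kerC_ofReal (s y θ : ℝ) : kerC ((s : ℂ), (y : ℂ)) θ = (kerR s y θ : ℂ) := by
  simp [kerC, kerR]

lemma kerC_norm_bound {a M : ℝ} (ha : 0 < a) (p : ℂ × ℂ) (h1 : a ≤ p.1.re)
    (h2 : ‖p.2‖ ≤ M) (θ : ℝ) :
    ‖kerC p θ‖ * (1 + |θ| + θ ^ 2) ≤
      2 * Real.exp ((M + 1) ^ 2 / a) * Real.exp (-((a / 2) * θ ^ 2) / 2) := by
  have hn : ‖kerC p θ‖ = Real.exp (-(p.1.re * θ ^ 2) / 2 + θ * p.2.re) := by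
    rw [kerC, Complex.norm_exp]
    congr 1
    have : (-(p.1 * (θ : ℂ) ^ 2) / 2 + (θ : ℂ) * p.2)
        = (((-(θ ^ 2) / 2 : ℝ)) : ℂ) * p.1 + (θ : ℂ) * p.2 := by push_cast; ring
    rw [this, Complex.add_re, Complex.re_ofReal_mul, Complex.re_ofReal_mul]
    ring
  have hq : 1 + |θ| + θ ^ 2 ≤ 2 * Real.exp |θ| := by
    have := Real.quadratic_le_exp_of_nonneg (abs_nonneg θ)
    rw [sq_abs] at this
    nlinarith [abs_nonneg θ]
  have hy : θ * p.2.re ≤ |θ| * M := by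
    calc θ * p.2.re ≤ |θ * p.2.re| := le_abs_self _
      _ = |θ| * |p.2.re| := abs_mul _ _
      _ ≤ |θ| * M := by
        gcongr
        exact (Complex.abs_re_le_norm _).trans h2
  have ham : |θ| * (M + 1) ≤ a * θ ^ 2 / 4 + (M + 1) ^ 2 / a := by
    have : a * θ ^ 2 / 4 + (M + 1) ^ 2 / a - |θ| * (M + 1)
        = (a * |θ| / 2 - (M + 1)) ^ 2 / a := by
      rw [← sq_abs θ]; field_simp; ring
    have h3 : 0 ≤ (a * |θ| / 2 - (M + 1)) ^ 2 / a := by positivity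
    linarith
  have hs : a * θ ^ 2 ≤ p.1.re * θ ^ 2 := by gcongr
  calc ‖kerC p θ‖ * (1 + |θ| + θ ^ 2)
      ≤ Real.exp (-(p.1.re * θ ^ 2) / 2 + θ * p.2.re) * (2 * Real.exp |θ|) := by
        rw [hn]; gcongr
    _ = 2 * Real.exp (-(p.1.re * θ ^ 2) / 2 + θ * p.2.re + |θ|) := by
        rw [Real.exp_add _ |θ|]; ring
    _ ≤ 2 * Real.exp ((M + 1) ^ 2 / a + -((a / 2) * θ ^ 2) / 2) := by
        refine mul_le_mul_of_nonneg_left (Real.exp_le_exp.2 ?_) (by norm_num)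
        linarith
    _ = _ := by rw [Real.exp_add]; ring

lemma kerD_norm_le (p : ℂ × ℂ) (θ : ℝ) : ‖kerD p θ‖ ≤ ‖kerC p θ‖ * (1 + |θ| + θ ^ 2) := by
  rw [kerD, norm_smul]
  gcongr
  refine (norm_add_le _ _).trans ?_
  rw [norm_smul, norm_smul]
  have h1 := ContinuousLinearMap.norm_fst_le ℂ ℂ ℂ
  have h2 := ContinuousLinearMap.norm_snd_le ℂ ℂ ℂ
  have e1 : ‖(-((θ : ℂ) ^ 2) / 2)‖ = θ ^ 2 / 2 := by simp
  have e2 : ‖(θ : ℂ)‖ = |θ| := by simp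
  rw [e1, e2]
  have : θ ^ 2 / 2 * ‖ContinuousLinearMap.fst ℂ ℂ ℂ‖ ≤ θ ^ 2 / 2 * 1 := by gcongr
  have : |θ| * ‖ContinuousLinearMap.snd ℂ ℂ ℂ‖ ≤ |θ| * 1 := by gcongr
  nlinarith [sq_nonneg θ]

lemma kerC_hasFDerivAt (p : ℂ × ℂ) (θ : ℝ) : HasFDerivAt (fun q => kerC q θ) (kerD p θ) p := by
  have h1 : HasFDerivAt (fun q : ℂ × ℂ => q.1) (ContinuousLinearMap.fst ℂ ℂ ℂ) p := hasFDerivAt_fst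
  have h2 : HasFDerivAt (fun q : ℂ × ℂ => q.2) (ContinuousLinearMap.snd ℂ ℂ ℂ) p := hasFDerivAt_snd
  have h := ((h1.const_mul (-((θ : ℂ) ^ 2) / 2)).add (h2.const_mul (θ : ℂ))).cexp
  have hk : ∀ q : ℂ × ℂ, kerC q θ = Complex.exp (-((θ : ℂ) ^ 2) / 2 * q.1 + (θ : ℂ) * q.2) := by
    intro q
    rw [kerC]
    congr 1
    ring
  rw [kerD, hk p]
  refine HasFDerivAt.congr_of_eventuallyEq h (Eventually.of_forall fun q => ?_)
  exact hk q

lemma kerC_cont (p : ℂ × ℂ) : Continuous (kerC p) := by unfold kerC; fun_prop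

lemma kerD_cont (p : ℂ × ℂ) : Continuous (kerD p) := by
  have := kerC_cont p
  unfold kerD; fun_prop

lemma kerD_cont' (θ : ℝ) : Continuous (fun p => kerD p θ) := by
  unfold kerD kerC; fun_prop

section
variable {μ : Measure ℝ}

lemma gauss_int (hint : ∀ ε : ℝ, 0 < ε →
      (∫⁻ θ, ENNReal.ofReal (Real.exp (-(ε * θ ^ 2) / 2)) ∂μ) < ⊤) {ε : ℝ} (hε : 0 < ε) :
    Integrable (fun θ => Real.exp (-(ε * θ ^ 2) / 2)) μ := by
  refine ⟨by fun_prop, ?_⟩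
  rw [hasFiniteIntegral_iff_ofReal (Eventually.of_forall fun θ => (Real.exp_pos _).le)]
  exact hint ε hε

/-- Local domination data. -/
lemma dom (hint : ∀ ε : ℝ, 0 < ε →
      (∫⁻ θ, ENNReal.ofReal (Real.exp (-(ε * θ ^ 2) / 2)) ∂μ) < ⊤) (p : ℂ × ℂ) (hp : 0 < p.1.re) :
    ∃ g : ℝ → ℝ, Integrable g μ ∧ ∀ᶠ q in 𝓝 p, ∀ θ, ‖kerC q θ‖ * (1 + |θ| + θ ^ 2) ≤ g θ := by
  refine ⟨_, (gauss_int hint (half_pos (half_pos hp))).const_mul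
    (2 * Real.exp ((‖p.2‖ + 1 + 1) ^ 2 / (p.1.re / 2))), ?_⟩
  have c1 : Continuous (fun q : ℂ × ℂ => q.1.re) := by fun_prop
  have c2 : Continuous (fun q : ℂ × ℂ => ‖q.2‖) := by fun_prop
  filter_upwards [c1.continuousAt.eventually (lt_mem_nhds (half_lt_self hp)),
    c2.continuousAt.eventually (gt_mem_nhds (lt_add_one ‖p.2‖))] with q h1 h2 θ
  exact kerC_norm_bound (half_pos hp) q h1.le h2.le θ

lemma kerC_integrable (hint : ∀ ε : ℝ, 0 < ε →
      (∫⁻ θ, ENNReal.ofReal (Real.exp (-(ε * θ ^ 2) / 2)) ∂μ) < ⊤) (p : ℂ × ℂ) (hp : 0 < p.1.re) :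
    Integrable (kerC p) μ := by
  obtain ⟨g, hg, h⟩ := dom hint p hp
  refine hg.mono' (kerC_cont p).aestronglyMeasurable (Eventually.of_forall fun θ => ?_)
  refine le_trans ?_ (h.self_of_nhds θ)
  have : 1 ≤ 1 + |θ| + θ ^ 2 := by nlinarith [abs_nonneg θ, sq_nonneg θ]
  exact le_mul_of_one_le_right (norm_nonneg _) this

lemma kerD_integrable (hint : ∀ ε : ℝ, 0 < ε →
      (∫⁻ θ, ENNReal.ofReal (Real.exp (-(ε * θ ^ 2) / 2)) ∂μ) < ⊤) (p : ℂ × ℂ) (hp : 0 < p.1.re) :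
    Integrable (kerD p) μ := by
  obtain ⟨g, hg, h⟩ := dom hint p hp
  exact hg.mono' (kerD_cont p).aestronglyMeasurable
    (Eventually.of_forall fun θ => (kerD_norm_le p θ).trans (h.self_of_nhds θ))

lemma F_hasFDerivAt (hint : ∀ ε : ℝ, 0 < ε →
      (∫⁻ θ, ENNReal.ofReal (Real.exp (-(ε * θ ^ 2) / 2)) ∂μ) < ⊤) (p : ℂ × ℂ) (hp : 0 < p.1.re) :
    HasFDerivAt (fun q => ∫ θ, kerC q θ ∂μ) (∫ θ, kerD p θ ∂μ) p := by
  obtain ⟨g, hg, h⟩ := dom hint p hp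
  exact hasFDerivAt_integral_of_dominated_of_fderiv_le (F' := kerD) h
    (Eventually.of_forall fun q => (kerC_cont q).aestronglyMeasurable)
    (kerC_integrable hint p hp) (kerD_cont p).aestronglyMeasurable
    (Eventually.of_forall fun θ q hq => (kerD_norm_le q θ).trans (hq θ)) hg
    (Eventually.of_forall fun θ q _ => kerC_hasFDerivAt q θ)

lemma D_continuousAt (hint : ∀ ε : ℝ, 0 < ε →
      (∫⁻ θ, ENNReal.ofReal (Real.exp (-(ε * θ ^ 2) / 2)) ∂μ) < ⊤) (p : ℂ × ℂ) (hp : 0 < p.1.re) :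
    ContinuousAt (fun q => ∫ θ, kerD q θ ∂μ) p := by
  obtain ⟨g, hg, h⟩ := dom hint p hp
  exact continuousAt_of_dominated
    (Eventually.of_forall fun q => (kerD_cont q).aestronglyMeasurable)
    (h.mono fun q hq => Eventually.of_forall fun θ => (kerD_norm_le q θ).trans (hq θ)) hg
    (Eventually.of_forall fun θ => (kerD_cont' θ).continuousAt)

lemma F_contDiffAt (hint : ∀ ε : ℝ, 0 < ε →
      (∫⁻ θ, ENNReal.ofReal (Real.exp (-(ε * θ ^ 2) / 2)) ∂μ) < ⊤) (p : ℂ × ℂ) (hp : 0 < p.1.re) :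
    ContDiffAt ℂ 1 (fun q => ∫ θ, kerC q θ ∂μ) p := by
  rw [contDiffAt_one_iff]
  have c1 : Continuous (fun q : ℂ × ℂ => q.1.re) := by fun_prop
  refine ⟨fun q => ∫ θ, kerD q θ ∂μ, {q | 0 < q.1.re},
    (isOpen_lt continuous_const c1).mem_nhds hp, ?_, ?_⟩
  · intro q hq
    exact (D_continuousAt hint q hq).continuousWithinAt
  · intro q hq
    exact F_hasFDerivAt hint q hq

lemma int_pos' (hμne : μ ≠ 0) (hsupp : μ (Set.Ioi (0 : ℝ))ᶜ = 0) {f : ℝ → ℝ}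
    (hf : Integrable f μ) (hpos : ∀ θ, 0 < θ → 0 < f θ) : 0 < ∫ θ, f θ ∂μ := by
  have hae : ∀ᵐ θ ∂μ, 0 < θ := by
    rw [ae_iff]; exact hsupp
  rw [integral_pos_iff_support_of_nonneg_ae (hae.mono fun θ h => (hpos θ h).le) hf]
  have : 0 < μ (Ioi 0) := by
    rw [pos_iff_ne_zero]
    intro h0
    apply hμne
    rw [← Measure.measure_univ_eq_zero, ← union_compl_self (Ioi (0 : ℝ))]
    exact measure_union_null h0 hsupp
  exact this.trans_le (measure_mono fun θ h => (hpos θ h).ne')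

lemma kerR_integrable (hint : ∀ ε : ℝ, 0 < ε →
      (∫⁻ θ, ENNReal.ofReal (Real.exp (-(ε * θ ^ 2) / 2)) ∂μ) < ⊤) {s : ℝ} (hs : 0 < s) (y : ℝ) :
    Integrable (kerR s y) μ := by
  have := (kerC_integrable hint ((s : ℂ), (y : ℂ)) (by simpa using hs)).re
  refine this.congr (Eventually.of_forall fun θ => ?_)
  simp only [kerC_ofReal]
  simp

lemma kerR_strictMono (hμne : μ ≠ 0) (hsupp : μ (Set.Ioi (0 : ℝ))ᶜ = 0)
    (hint : ∀ ε : ℝ, 0 < ε →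
      (∫⁻ θ, ENNReal.ofReal (Real.exp (-(ε * θ ^ 2) / 2)) ∂μ) < ⊤) {s : ℝ} (hs : 0 < s) :
    StrictMono (fun y => ∫ θ, kerR s y θ ∂μ) := by
  intro y z hyz
  have h1 := kerR_integrable hint hs y
  have h2 := kerR_integrable hint hs z
  have := int_pos' hμne hsupp (h2.sub h1) (fun θ hθ => by
    simp only [Pi.sub_apply, sub_pos, kerR]
    gcongr)
  simp only [Pi.sub_apply] at this
  rw [integral_sub h2 h1] at this
  simpa using this

lemma F_ofReal (s y : ℝ) :
    (∫ θ, kerC ((s : ℂ), (y : ℂ)) θ ∂μ) = ((∫ θ, kerR s y θ ∂μ : ℝ) : ℂ) := by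
  simp only [kerC_ofReal]
  exact integral_ofReal

lemma D_inr (hμne : μ ≠ 0) (hsupp : μ (Set.Ioi (0 : ℝ))ᶜ = 0)
    (hint : ∀ ε : ℝ, 0 < ε →
      (∫⁻ θ, ENNReal.ofReal (Real.exp (-(ε * θ ^ 2) / 2)) ∂μ) < ⊤) {s : ℝ} (hs : 0 < s) (y : ℝ) :
    (∫ θ, kerD ((s : ℂ), (y : ℂ)) θ ∂μ) (0, 1) ≠ 0 := by
  have hi := kerD_integrable hint ((s : ℂ), (y : ℂ)) (by simpa using hs)
  rw [ContinuousLinearMap.integral_apply hi]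
  have he : ∀ θ : ℝ, kerD ((s : ℂ), (y : ℂ)) θ (0, 1) = ((kerR s y θ * θ : ℝ) : ℂ) := by
    intro θ
    simp [kerD, kerC_ofReal]
  have hi2 := (hi.apply_continuousLinearMap ((0 : ℂ), (1 : ℂ))).re
  simp only [he] at hi2 ⊢
  rw [integral_complex_ofReal]
  have := int_pos' hμne hsupp (f := fun θ => kerR s y θ * θ) (by simpa using hi2)
    (fun θ hθ => mul_pos (Real.exp_pos _) hθ)
  exact_mod_cast this.ne'

end

theorem stmt_0 (μ : Measure ℝ) [SigmaFinite μ] (hμne : μ ≠ 0)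
    (hsupp : μ (Set.Ioi (0 : ℝ))ᶜ = 0)
    (hint : ∀ ε : ℝ, 0 < ε →
      (∫⁻ θ, ENNReal.ofReal (Real.exp (-(ε * θ ^ 2) / 2)) ∂μ) < ⊤)
    (b : ℝ → ℝ)
    (hb : ∀ t ∈ Set.Ioi (0 : ℝ), rMu μ t (b t) = 1) :
    AnalyticOnNhd ℝ b (Set.Ioi 0) := by
  -- the equation in the new variables
  have hR : ∀ t : ℝ, 0 < t → ∫ θ, kerR t⁻¹ (b t / t) θ ∂μ = 1 := by
    intro t ht
    have h1 := hb t ht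
    have h2 : ∀ θ, rTheta θ t (b t) = kerR t⁻¹ (b t / t) θ := by
      intro θ
      rw [rTheta, kerR]
      congr 1
      field_simp
    simp only [rMu, h2] at h1
    rw [← ofReal_integral_eq_lintegral_ofReal (kerR_integrable hint (inv_pos.2 ht) _)
      (Eventually.of_forall fun θ => (Real.exp_pos _).le)] at h1
    simpa using h1
  intro t₀ ht₀
  have ht₀ : 0 < t₀ := ht₀
  set s₀ : ℝ := t₀⁻¹ with hs₀
  set y₀ : ℝ := b t₀ / t₀ with hy₀
  have hs₀pos : 0 < s₀ := inv_pos.2 ht₀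
  set F : ℂ × ℂ → ℂ := fun q => ∫ θ, kerC q θ ∂μ with hF
  have hre : 0 < (((s₀ : ℂ), (y₀ : ℂ)) : ℂ × ℂ).1.re := by simpa using hs₀pos
  have cdf : ContDiffAt ℂ 1 F ((s₀ : ℂ), (y₀ : ℂ)) := F_contDiffAt hint _ hre
  have if₂ : (fderiv ℂ F ((s₀ : ℂ), (y₀ : ℂ)) ∘L .inr ℂ ℂ ℂ).IsInvertible := by
    rw [(F_hasFDerivAt hint _ hre).fderiv]
    have hne := D_inr hμne hsupp hint hs₀pos y₀
    refine ⟨ContinuousLinearEquiv.unitsEquivAut ℂ (Units.mk0 _ hne), ?_⟩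
    ext
    simp
  set ψ := cdf.implicitFunction one_ne_zero if₂ with hψ
  have hψan : AnalyticAt ℂ ψ (s₀ : ℂ) := by
    have h := cdf.contDiffAt_implicitFunction one_ne_zero if₂
    rw [Complex.analyticAt_iff_eventually_differentiableAt]
    exact (h.eventually (by simp)).mono fun z hz => hz.differentiableAt one_ne_zero
  have hiff := cdf.eventually_apply_eq_iff_implicitFunction one_ne_zero if₂
  -- continuity of the transformed boundary
  have hcontinv : Tendsto (fun t : ℝ => t⁻¹) (𝓝 t₀) (𝓝 s₀) := (continuousAt_inv₀ ht₀.ne')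
  have hsec : ∀ y : ℝ, ContinuousAt (fun t : ℝ => ∫ θ, kerR t⁻¹ y θ ∂μ) t₀ := by
    intro y
    have hc : ContinuousAt F ((s₀ : ℂ), (y : ℂ)) :=
      (F_hasFDerivAt hint _ (by simpa using hs₀pos)).continuousAt
    have hg : Tendsto (fun t : ℝ => (((t⁻¹ : ℝ) : ℂ), (y : ℂ))) (𝓝 t₀) (𝓝 ((s₀ : ℂ), (y : ℂ))) :=
      ((Complex.continuous_ofReal.tendsto _).comp hcontinv).prodMk_nhds tendsto_const_nhds
    have := (Complex.continuous_re.tendsto _).comp (hc.tendsto.comp hg)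
    refine (this.congr fun t => ?_).trans ?_
    · simp only [Function.comp, hF]
      rw [F_ofReal, Complex.ofReal_re]
    · simp only [hF]
      rw [F_ofReal, Complex.ofReal_re]
  have hpos : ∀ᶠ t in 𝓝 t₀, 0 < t := lt_mem_nhds ht₀
  have hcont : Tendsto (fun t => b t / t) (𝓝 t₀) (𝓝 y₀) := by
    have hm₀ := kerR_strictMono hμne hsupp hint hs₀pos
    rw [tendsto_order]
    constructor
    · intro a ha
      have h1 : ∫ θ, kerR t₀⁻¹ a θ ∂μ < 1 := by
        rw [← hR t₀ ht₀]; exact hm₀ ha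
      filter_upwards [(hsec a).eventually (gt_mem_nhds h1), hpos] with t h2 ht
      rw [← hR t ht] at h2
      exact (kerR_strictMono hμne hsupp hint (inv_pos.2 ht)).lt_iff_lt.1 h2
    · intro a ha
      have h1 : 1 < ∫ θ, kerR t₀⁻¹ a θ ∂μ := by
        rw [← hR t₀ ht₀]; exact hm₀ ha
      filter_upwards [(hsec a).eventually (lt_mem_nhds h1), hpos] with t h2 ht
      rw [← hR t ht] at h2
      exact (kerR_strictMono hμne hsupp hint (inv_pos.2 ht)).lt_iff_lt.1 h2
  have htend : Tendsto (fun t : ℝ => (((t⁻¹ : ℝ) : ℂ), ((b t / t : ℝ) : ℂ))) (𝓝 t₀)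
      (𝓝 ((s₀ : ℂ), (y₀ : ℂ))) :=
    ((Complex.continuous_ofReal.tendsto _).comp hcontinv).prodMk_nhds
      ((Complex.continuous_ofReal.tendsto _).comp hcont)
  have heq : (fun t : ℝ => t * (ψ ((t⁻¹ : ℝ) : ℂ)).re) =ᶠ[𝓝 t₀] b := by
    filter_upwards [htend.eventually hiff, hpos] with t h ht
    have : F (((t⁻¹ : ℝ) : ℂ), ((b t / t : ℝ) : ℂ)) = F ((s₀ : ℂ), (y₀ : ℂ)) := by
      simp only [hF]
      rw [F_ofReal, F_ofReal, hR t ht, hR t₀ ht₀]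
    have h3 := h.1 this
    change ψ ((t⁻¹ : ℝ) : ℂ) = ((b t / t : ℝ) : ℂ) at h3
    rw [h3, Complex.ofReal_re]
    field_simp
  refine AnalyticAt.congr ?_ heq
  have h1 : AnalyticAt ℝ (fun s : ℝ => (ψ (s : ℂ)).re) s₀ := hψan.re_ofReal
  have h2 : AnalyticAt ℝ (fun t : ℝ => t⁻¹) t₀ := analyticAt_id.inv ht₀.ne'
  exact analyticAt_id.mul (h1.comp h2)
end

section
/- Let μ be a nonzero, σ-finite, nonnegative Borel measure on (0,∞) such that ∫ exp(−ε·θ²/2) μ(dθ) < ∞ for every ε > 0, and let b : (0,∞) → ℝ satisfy r_μ(t, b(t)) = 1 for every t ∈ (0,∞). Then b is concave on (0,∞). -/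
open MeasureTheory Set Filter
open scoped ENNReal NNReal Topology

theorem stmt_1 (μ : Measure ℝ) [SigmaFinite μ] (hμne : μ ≠ 0)
    (hsupp : μ (Set.Ioi (0 : ℝ))ᶜ = 0)
    (hint : ∀ ε : ℝ, 0 < ε →
      (∫⁻ θ, ENNReal.ofReal (Real.exp (-(ε * θ ^ 2) / 2)) ∂μ) < ⊤)
    (b : ℝ → ℝ)
    (hb : ∀ t ∈ Set.Ioi (0 : ℝ), rMu μ t (b t) = 1) :
    ConcaveOn ℝ (Set.Ioi 0) b := by
  have hpos : ∀ θ t x : ℝ, 0 < rTheta θ t x := fun _ _ _ => Real.exp_pos _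
  have hmeas : ∀ t x : ℝ, Measurable fun θ : ℝ => ENNReal.ofReal (rTheta θ t x) := by
    intro t x
    unfold rTheta
    fun_prop
  refine ⟨convex_Ioi 0, ?_⟩
  intro t₁ ht₁ t₂ ht₂ p q hp hq hpq
  simp only [Set.mem_Ioi] at ht₁ ht₂
  have ht : 0 < p • t₁ + q • t₂ := (convex_Ioi (0 : ℝ)) ht₁ ht₂ hp hq hpq
  simp only [smul_eq_mul] at ht ⊢
  set t := p * t₁ + q * t₂ with htdef
  set x := p * b t₁ + q * b t₂ with hxdef
  -- upper bound via weighted AM-GM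
  have hle : rMu μ t x ≤ 1 := by
    have hw : p * t₁ / t + q * t₂ / t = 1 := by
      rw [← add_div, ← htdef, div_self ht.ne']
    have hw1 : 0 ≤ p * t₁ / t := by positivity
    have hw2 : 0 ≤ q * t₂ / t := by positivity
    have hpt : ∀ θ, rTheta θ t x ≤
        p * t₁ / t * rTheta θ t₁ (b t₁) + q * t₂ / t * rTheta θ t₂ (b t₂) := by
      intro θ
      have h := convexOn_exp.2 (Set.mem_univ (-θ ^ 2 / (2 * t₁) + θ * b t₁ / t₁))
        (Set.mem_univ (-θ ^ 2 / (2 * t₂) + θ * b t₂ / t₂)) hw1 hw2 hw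
      simp only [smul_eq_mul] at h
      unfold rTheta
      refine le_trans (le_of_eq ?_) h
      congr 1
      have e1 : p * t₁ / t * (-θ ^ 2 / (2 * t₁) + θ * b t₁ / t₁)
          = p * (-θ ^ 2 / 2 + θ * b t₁) / t := by
        field_simp
      have e2 : q * t₂ / t * (-θ ^ 2 / (2 * t₂) + θ * b t₂ / t₂)
          = q * (-θ ^ 2 / 2 + θ * b t₂) / t := by
        field_simp
      rw [e1, e2, hxdef, ← add_div, show -θ ^ 2 / (2 * t) = (-θ ^ 2 / 2) / t by field_simp,
        ← add_div]
      congr 1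
      linear_combination (-(-θ ^ 2 / 2)) * hpq
    calc rMu μ t x ≤ ∫⁻ θ, (ENNReal.ofReal (p * t₁ / t) * ENNReal.ofReal (rTheta θ t₁ (b t₁))
          + ENNReal.ofReal (q * t₂ / t) * ENNReal.ofReal (rTheta θ t₂ (b t₂))) ∂μ := by
          refine lintegral_mono fun θ => ?_
          rw [← ENNReal.ofReal_mul hw1, ← ENNReal.ofReal_mul hw2,
            ← ENNReal.ofReal_add (mul_nonneg hw1 (hpos _ _ _).le)
              (mul_nonneg hw2 (hpos _ _ _).le)]
          exact ENNReal.ofReal_le_ofReal (hpt θ)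
      _ = ENNReal.ofReal (p * t₁ / t) * rMu μ t₁ (b t₁)
          + ENNReal.ofReal (q * t₂ / t) * rMu μ t₂ (b t₂) := by
          rw [lintegral_add_left ((hmeas _ _).const_mul _), lintegral_const_mul _ (hmeas _ _),
            lintegral_const_mul _ (hmeas _ _)]
          rfl
      _ = 1 := by
          rw [hb t₁ ht₁, hb t₂ ht₂, mul_one, mul_one, ← ENNReal.ofReal_add hw1 hw2, hw,
            ENNReal.ofReal_one]
  -- strict monotonicity in the space variable
  by_contra hlt
  push Not at hlt
  have hae : ∀ᵐ θ ∂μ, θ ∈ Set.Ioi (0 : ℝ) := by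
    rw [ae_iff]
    exact hsupp
  have hstrict : rMu μ t (b t) < rMu μ t x := by
    refine lintegral_strict_mono hμne (hmeas _ _).aemeasurable ?_ ?_
    · have := hb t ht
      unfold rMu at this
      rw [this]
      exact ENNReal.one_ne_top
    · filter_upwards [hae] with θ hθ
      rw [ENNReal.ofReal_lt_ofReal_iff (hpos _ _ _)]
      refine Real.exp_lt_exp.2 ?_
      have hθ0 : 0 < θ := hθ
      gcongr
  rw [hb t ht] at hstrict
  exact absurd hle (not_le.2 hstrict)
end

section
/- Let μ be a nonzero, σ-finite, nonnegative Borel measure on (0,∞) such that ∫ exp(−ε·θ²/2) μ(dθ) < ∞ for every ε > 0, let b : (0,∞) → ℝ satisfy r_μ(t, b(t)) = 1 for every t ∈ (0,∞), and set θ* := inf{ θ ∈ (0,∞) : μ((0,θ]) > 0 }. Then b(t) tends to θ*/2 as t decreases to 0. -/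
open MeasureTheory Set Filter
open scoped ENNReal NNReal Topology

lemma rMu_mono (μ : Measure ℝ) (hpos : ∀ᵐ θ ∂μ, 0 < θ) {t x y : ℝ} (ht : 0 < t) (h : x ≤ y) :
    rMu μ t x ≤ rMu μ t y := by
  apply lintegral_mono_ae
  filter_upwards [hpos] with θ hθ
  unfold rTheta
  gcongr

lemma rMu_tendsto_zero (μ : Measure ℝ) (hpos : ∀ᵐ θ ∂μ, 0 < θ)
    (hint : ∀ ε : ℝ, 0 < ε →
      (∫⁻ θ, ENNReal.ofReal (Real.exp (-(ε * θ ^ 2) / 2)) ∂μ) < ⊤)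
    (c : ℝ) (hc : ∀ᵐ θ ∂μ, 2 * c < θ) :
    Tendsto (fun t => rMu μ t c) (𝓝[>] 0) (𝓝 0) := by
  have key : Tendsto (fun t => rMu μ t c) (𝓝[>] 0) (𝓝 (∫⁻ _, 0 ∂μ)) := by
    unfold rMu
    apply tendsto_lintegral_filter_of_dominated_convergence
      (fun θ => ENNReal.ofReal (Real.exp (c ^ 2)) *
        ENNReal.ofReal (Real.exp (-((1/2) * θ ^ 2) / 2)))
    · refine Eventually.of_forall fun t => ?_
      unfold rTheta
      fun_prop
    · have h1 : ∀ᶠ t : ℝ in 𝓝[>] 0, t < 1 :=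
        mem_nhdsWithin_of_mem_nhds (Iio_mem_nhds one_pos)
      filter_upwards [h1, self_mem_nhdsWithin] with t ht1 ht0
      filter_upwards [hpos, hc] with θ hθ hθc
      have ht0 : 0 < t := ht0
      rw [← ENNReal.ofReal_mul (Real.exp_pos _).le, ← Real.exp_add]
      apply ENNReal.ofReal_le_ofReal
      unfold rTheta
      apply Real.exp_le_exp.2
      have e : -θ ^ 2 / (2 * t) + θ * c / t = -((θ * (θ - 2 * c) / 2) / t) := by
        field_simp; ring
      have hn : 0 ≤ θ * (θ - 2 * c) / 2 := by
        have := mul_pos hθ (sub_pos.2 hθc); linarith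
      have : θ * (θ - 2 * c) / 2 ≤ (θ * (θ - 2 * c) / 2) / t :=
        le_div_self hn ht0 ht1.le
      rw [e]
      nlinarith [sq_nonneg (c - θ / 2)]
    · rw [lintegral_const_mul _ (by fun_prop)]
      exact (ENNReal.mul_lt_top ENNReal.ofReal_lt_top (hint (1/2) (by norm_num))).ne
    · filter_upwards [hpos, hc] with θ hθ hθc
      have hn : 0 < θ * (θ - 2 * c) / 2 := by
        have := mul_pos hθ (sub_pos.2 hθc); linarith
      have h2 : Tendsto (fun t : ℝ => -((θ * (θ - 2 * c) / 2) * t⁻¹)) (𝓝[>] 0) atBot :=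
        tendsto_neg_atTop_atBot.comp (tendsto_inv_nhdsGT_zero.const_mul_atTop hn)
      have h3 := ENNReal.tendsto_ofReal (Real.tendsto_exp_atBot.comp h2)
      rw [ENNReal.ofReal_zero] at h3
      refine h3.congr' ?_
      filter_upwards [self_mem_nhdsWithin] with t ht0
      have ht0 : 0 < t := ht0
      unfold rTheta
      simp only [Function.comp]
      congr 2
      field_simp; ring
  simpa using key

lemma rMu_tendsto_top (μ : Measure ℝ) (c δ a : ℝ) (hδ : 0 < δ) (ha : a < 2 * c)
    (hm : μ (Ioc δ a) ≠ 0) :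
    Tendsto (fun t => rMu μ t c) (𝓝[>] 0) (𝓝 ⊤) := by
  have hn : 0 < δ * (2 * c - a) / 2 := by
    have := mul_pos hδ (sub_pos.2 ha); linarith
  have h2 : Tendsto (fun t : ℝ => (δ * (2 * c - a) / 2) * t⁻¹) (𝓝[>] 0) atTop :=
    tendsto_inv_nhdsGT_zero.const_mul_atTop hn
  have h3 := ENNReal.tendsto_ofReal_atTop.comp (Real.tendsto_exp_atTop.comp h2)
  have h4 := ENNReal.Tendsto.mul_const (b := μ (Ioc δ a)) h3 (Or.inl ENNReal.top_ne_zero)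
  rw [ENNReal.top_mul hm] at h4
  refine tendsto_of_tendsto_of_tendsto_of_le_of_le' h4 tendsto_const_nhds ?_
    (Eventually.of_forall fun _ => le_top)
  filter_upwards [self_mem_nhdsWithin] with t ht0
  have ht0 : 0 < t := ht0
  unfold rMu
  refine le_trans ?_ (setLIntegral_le_lintegral (Ioc δ a) _)
  rw [← setLIntegral_const]
  refine setLIntegral_mono' measurableSet_Ioc fun θ hθ => ?_
  apply ENNReal.ofReal_le_ofReal
  unfold rTheta
  apply Real.exp_le_exp.2
  have e : -θ ^ 2 / (2 * t) + θ * c / t = (θ * (2 * c - θ) / 2) * t⁻¹ := by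
    field_simp; ring
  rw [e]
  apply mul_le_mul_of_nonneg_right _ (inv_pos.2 ht0).le
  have := mul_le_mul hθ.1.le (sub_le_sub_left hθ.2 (2 * c)) (by linarith) (by linarith [hθ.1])
  linarith

theorem stmt_2 (μ : Measure ℝ) [SigmaFinite μ] (hμne : μ ≠ 0)
    (hsupp : μ (Set.Ioi (0 : ℝ))ᶜ = 0)
    (hint : ∀ ε : ℝ, 0 < ε →
      (∫⁻ θ, ENNReal.ofReal (Real.exp (-(ε * θ ^ 2) / 2)) ∂μ) < ⊤)
    (b : ℝ → ℝ)
    (hb : ∀ t ∈ Set.Ioi (0 : ℝ), rMu μ t (b t) = 1) :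
    Tendsto b (nhdsWithin 0 (Set.Ioi 0))
      (𝓝 (sInf {θ : ℝ | 0 < θ ∧ 0 < μ (Set.Ioc 0 θ)} / 2)) := by
  set S := {θ : ℝ | 0 < θ ∧ 0 < μ (Set.Ioc 0 θ)} with hS
  have hpos : ∀ᵐ θ ∂μ, 0 < θ := hsupp
  have hbdd : BddBelow S := ⟨0, fun x hx => hx.1.le⟩
  have hnon : ∀ q : ℝ, 0 < q → q ∉ S → ∀ᵐ θ ∂μ, θ ∉ Ioc 0 q := by
    intro q hq hqS
    have h0 : μ (Ioc 0 q) = 0 := by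
      by_contra h
      exact hqS ⟨hq, pos_iff_ne_zero.2 h⟩
    exact measure_eq_zero_iff_ae_notMem.1 h0
  have hne : S.Nonempty := by
    by_contra h
    rw [not_nonempty_iff_eq_empty] at h
    have h1 : ∀ᵐ θ ∂μ, ∀ n : ℕ, θ ∉ Ioc (0:ℝ) (n + 1) :=
      ae_all_iff.2 fun n => hnon _ (by positivity) (by rw [h]; simp)
    have h2 : ∀ᵐ θ ∂μ, False := by
      filter_upwards [hpos, h1] with θ h0 h1
      obtain ⟨n, hn⟩ := exists_nat_gt θ
      exact h1 n ⟨h0, by linarith⟩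
    apply hμne
    rw [← ae_eq_bot]
    exact eventually_false_iff_eq_bot.1 h2
  have hge : ∀ᵐ θ ∂μ, sInf S ≤ θ := by
    have h1 : ∀ᵐ θ ∂μ, ∀ q : ℚ, 0 < (q:ℝ) → (q:ℝ) ∉ S → θ ∉ Ioc (0:ℝ) q := by
      refine ae_all_iff.2 fun q => ?_
      by_cases hq : 0 < (q:ℝ) ∧ (q:ℝ) ∉ S
      · filter_upwards [hnon q hq.1 hq.2] with θ h _ _ using h
      · exact Eventually.of_forall fun θ h1 h2 => absurd ⟨h1, h2⟩ hq
    filter_upwards [hpos, h1] with θ h0 h1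
    by_contra! hlt
    obtain ⟨q, hq1, hq2⟩ := exists_rat_btwn hlt
    exact h1 q (h0.trans hq1) (notMem_of_lt_csInf hq2 hbdd) ⟨h0, hq1.le⟩
  have hSnn : 0 ≤ sInf S := le_csInf hne fun x hx => hx.1.le
  apply tendsto_order.2 ⟨fun c hc => ?_, fun c hc => ?_⟩
  · have hlim := rMu_tendsto_zero μ hpos hint c (by
      filter_upwards [hge] with θ h
      linarith)
    filter_upwards [hlim.eventually (gt_mem_nhds zero_lt_one), self_mem_nhdsWithin] with t h1 ht
    by_contra! hle
    have := rMu_mono μ hpos ht hle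
    rw [hb t ht] at this
    exact absurd h1 (not_lt.2 this)
  · obtain ⟨a, haS, ha⟩ := exists_lt_of_csInf_lt hne (show sInf S < 2 * c by linarith)
    obtain ⟨n, hn⟩ : ∃ n : ℕ, μ (Ioc (1 / ((n:ℝ) + 1)) a) ≠ 0 := by
      by_contra! h
      have h1 := measure_iUnion_null h
      refine haS.2.ne' (measure_mono_null (fun θ hθ => ?_) h1)
      obtain ⟨n, hn⟩ := exists_nat_one_div_lt hθ.1
      exact mem_iUnion.2 ⟨n, hn, hθ.2⟩
    have hlim := rMu_tendsto_top μ c _ a (by positivity) ha hn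
    filter_upwards [hlim.eventually (lt_mem_nhds ENNReal.one_lt_top), self_mem_nhdsWithin]
      with t h1 ht
    by_contra! hle
    have := rMu_mono μ hpos ht hle
    rw [hb t ht] at this
    exact absurd h1 (not_lt.2 this)
end

section
/- Let b : [0,∞) → ℝ be real-analytic (i.e. the restriction of a function analytic on an open set containing [0,∞)) with b(0) > 0. Let μ be a σ-finite nonnegative Borel measure on (0,∞) with μ((0, 2b(0))) = 0 and ∫ exp(−θ²/(2t*)) μ(dθ) < ∞ for some t* ∈ (0,∞). Suppose there is a sequence (t_n) of pairwise distinct points of (0,∞) having an accumulation point t̃ ∈ (0, t*) and satisfying r_μ(t_n, b(t_n)) = 1 for every n. Then r_μ(t, b(t)) = 1 for every t ∈ (0, t*). -/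
open MeasureTheory Set Filter
open scoped ENNReal NNReal Topology

/-- Elementary bound used for domination. -/
lemma aux_bound (a d K x re1 : ℝ) (hd : 0 < d) (hK : 0 ≤ K) (h1 : a + 2 * d ≤ re1) :
    K * (x ^ 2 + |x|) * Real.exp (-x ^ 2 * re1 + |x| * K) ≤
      3 * K * Real.exp ((K + 1) ^ 2 / (8 * d)) * Real.exp (-x ^ 2 * a) := by
  have hx := abs_nonneg x
  have h2 : x ^ 2 + |x| ≤ 3 * Real.exp |x| := by
    have := Real.quadratic_le_exp_of_nonneg hx
    rw [sq_abs] at this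
    nlinarith
  have h3 : Real.exp |x| * Real.exp (-x ^ 2 * re1 + |x| * K) ≤
      Real.exp ((K + 1) ^ 2 / (8 * d)) * Real.exp (-x ^ 2 * a) := by
    rw [← Real.exp_add, ← Real.exp_add]
    apply Real.exp_le_exp.2
    have h4 : (K + 1) * |x| - 2 * d * x ^ 2 ≤ (K + 1) ^ 2 / (8 * d) := by
      rw [le_div_iff₀ (by positivity)]
      rw [← sq_abs x]
      nlinarith [sq_nonneg ((K + 1) - 4 * d * |x|)]
    nlinarith [sq_nonneg x, mul_le_mul_of_nonneg_left h1 (sq_nonneg x)]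
  calc K * (x ^ 2 + |x|) * Real.exp (-x ^ 2 * re1 + |x| * K)
      ≤ K * (3 * Real.exp |x|) * Real.exp (-x ^ 2 * re1 + |x| * K) := by gcongr
    _ = 3 * K * (Real.exp |x| * Real.exp (-x ^ 2 * re1 + |x| * K)) := by ring
    _ ≤ 3 * K * (Real.exp ((K + 1) ^ 2 / (8 * d)) * Real.exp (-x ^ 2 * a)) := by gcongr
    _ = _ := by ring

lemma aux_bound' (a d K x re1 : ℝ) (hd : 0 < d) (hK : 0 ≤ K) (h1 : a + 2 * d ≤ re1) :
    Real.exp (-x ^ 2 * re1 + |x| * K) ≤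
      Real.exp ((K + 1) ^ 2 / (8 * d)) * Real.exp (-x ^ 2 * a) := by
  have hx := abs_nonneg x
  rw [← Real.exp_add]
  apply Real.exp_le_exp.2
  have h4 : (K + 1) * |x| - 2 * d * x ^ 2 ≤ (K + 1) ^ 2 / (8 * d) := by
    rw [le_div_iff₀ (by positivity)]
    rw [← sq_abs x]
    nlinarith [sq_nonneg ((K + 1) - 4 * d * |x|)]
  nlinarith [sq_nonneg x, mul_le_mul_of_nonneg_left h1 (sq_nonneg x)]

/-- Holomorphy of the parametric integral. -/
lemma analyticAt_integral (μ : Measure ℝ) (a : ℝ)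
    (hint : Integrable (fun θ : ℝ => Real.exp (-θ ^ 2 * a)) μ)
    (u v : ℂ → ℂ) (z0 : ℂ) (hu : AnalyticAt ℂ u z0) (hv : AnalyticAt ℂ v z0)
    (ha : a < (u z0).re) :
    AnalyticAt ℂ (fun z => ∫ θ : ℝ, Complex.exp (-(θ : ℂ) ^ 2 * u z + θ * v z) ∂μ) z0 ∧
    ∀ᶠ z in 𝓝 z0, Integrable (fun θ : ℝ => Complex.exp (-(θ : ℂ) ^ 2 * u z + θ * v z)) μ := by
  obtain ⟨d, hd, hd'⟩ : ∃ d : ℝ, 0 < d ∧ a + 2 * d < (u z0).re :=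
    ⟨((u z0).re - a) / 4, by linarith, by linarith⟩
  set K : ℝ := ‖v z0‖ + ‖deriv u z0‖ + ‖deriv v z0‖ + 1 with hKdef
  have n1 := norm_nonneg (v z0)
  have n2 := norm_nonneg (deriv u z0)
  have n3 := norm_nonneg (deriv v z0)
  have hK : 0 ≤ K := by positivity
  have e1 : ∀ᶠ z in 𝓝 z0, a + 2 * d < (u z).re :=
    (Complex.continuous_re.continuousAt.comp hu.continuousAt).eventually (lt_mem_nhds hd')
  have e2 : ∀ᶠ z in 𝓝 z0, ‖v z‖ < K :=
    hv.continuousAt.norm.eventually (gt_mem_nhds (by linarith))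
  have e3 : ∀ᶠ z in 𝓝 z0, ‖deriv u z‖ < K :=
    hu.deriv.continuousAt.norm.eventually (gt_mem_nhds (by linarith))
  have e4 : ∀ᶠ z in 𝓝 z0, ‖deriv v z‖ < K :=
    hv.deriv.continuousAt.norm.eventually (gt_mem_nhds (by linarith))
  have eall := e1.and (e2.and (e3.and (e4.and
    (hu.eventually_analyticAt.and hv.eventually_analyticAt))))
  have hmeas : ∀ z, AEStronglyMeasurable
      (fun θ : ℝ => Complex.exp (-(θ : ℂ) ^ 2 * u z + θ * v z)) μ := fun z =>
    (by fun_prop : Continuous _).aestronglyMeasurable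
  have hnorm : ∀ z, ‖v z‖ < K → ∀ θ : ℝ, ‖Complex.exp (-(θ : ℂ) ^ 2 * u z + θ * v z)‖ ≤
      Real.exp (-θ ^ 2 * (u z).re + |θ| * K) := by
    intro z hz θ
    rw [Complex.norm_exp]
    apply Real.exp_le_exp.2
    have : (-(θ : ℂ) ^ 2 * u z + θ * v z).re = -θ ^ 2 * (u z).re + θ * (v z).re := by
      rw [← Complex.ofReal_pow, ← Complex.ofReal_neg, Complex.add_re, Complex.re_ofReal_mul,
        Complex.re_ofReal_mul]
    rw [this]
    have h1 : θ * (v z).re ≤ |θ| * K := by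
      calc θ * (v z).re ≤ |θ * (v z).re| := le_abs_self _
        _ = |θ| * |(v z).re| := abs_mul _ _
        _ ≤ |θ| * K := by
          gcongr
          exact (Complex.abs_re_le_norm _).trans hz.le
    linarith
  have hI : ∀ z, a + 2 * d < (u z).re → ‖v z‖ < K →
      Integrable (fun θ : ℝ => Complex.exp (-(θ : ℂ) ^ 2 * u z + θ * v z)) μ := by
    intro z h1 h2
    refine Integrable.mono' (hint.const_mul (Real.exp ((K + 1) ^ 2 / (8 * d)))) (hmeas z) ?_
    exact Eventually.of_forall fun θ =>
      (hnorm z h2 θ).trans (aux_bound' a d K θ _ hd hK h1.le)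
  refine ⟨?_, (e1.and e2).mono fun z hz => hI z hz.1 hz.2⟩
  rw [Complex.analyticAt_iff_eventually_differentiableAt]
  filter_upwards [eall.eventually_nhds] with z hz
  have hz0 := hz.self_of_nhds
  refine (hasDerivAt_integral_of_dominated_loc_of_deriv_le
    (F := fun z (θ : ℝ) => Complex.exp (-(θ : ℂ) ^ 2 * u z + θ * v z))
    (F' := fun z (θ : ℝ) => Complex.exp (-(θ : ℂ) ^ 2 * u z + θ * v z) *
      (-(θ : ℂ) ^ 2 * deriv u z + θ * deriv v z))
    (bound := fun θ => 3 * K * Real.exp ((K + 1) ^ 2 / (8 * d)) * Real.exp (-θ ^ 2 * a))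
    hz (Eventually.of_forall hmeas) (hI z hz0.1 hz0.2.1)
    (by fun_prop : Continuous _).aestronglyMeasurable ?_ (hint.const_mul _) ?_).2.differentiableAt
  · refine Eventually.of_forall fun θ w hw => ?_
    obtain ⟨h1, h2, h3, h4, h5, h6⟩ := hw
    refine le_trans ?_ (aux_bound a d K θ _ hd hK h1.le)
    rw [norm_mul, mul_comm]
    refine mul_le_mul ?_ (hnorm w h2 θ) (norm_nonneg _) (by positivity)
    refine (norm_add_le _ _).trans ?_
    rw [norm_mul, norm_mul, norm_neg, norm_pow, Complex.norm_real, Real.norm_eq_abs, sq_abs]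
    nlinarith [mul_le_mul_of_nonneg_left h3.le (sq_nonneg θ),
      mul_le_mul_of_nonneg_left h4.le (abs_nonneg θ)]
  · refine Eventually.of_forall fun θ w hw => ?_
    obtain ⟨h1, h2, h3, h4, h5, h6⟩ := hw
    exact ((h5.differentiableAt.hasDerivAt.const_mul _).add
      (h6.differentiableAt.hasDerivAt.const_mul _)).cexp

/-- A real-analytic function extends holomorphically near a point. -/
lemma exists_complex_extension (b : ℝ → ℝ) (t0 : ℝ) (hb : AnalyticAt ℝ b t0) :
    ∃ B : ℂ → ℂ, AnalyticAt ℂ B t0 ∧ ∀ᶠ t : ℝ in 𝓝 t0, B t = b t := by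
  obtain ⟨p, r, hp⟩ := hb
  obtain ⟨s, hs0, hsr⟩ := ENNReal.lt_iff_exists_nnreal_btwn.1 hp.r_pos
  have hs0' : 0 < (s : ℝ) := by exact_mod_cast hs0
  have hsum := p.summable_norm_mul_pow (hsr.trans_le hp.r_le)
  refine ⟨fun z => ∑' n : ℕ, (p.coeff n : ℂ) * (z - t0) ^ n, ?_, ?_⟩
  · have : DifferentiableOn ℂ (fun z : ℂ => ∑' n : ℕ, (p.coeff n : ℂ) * (z - t0) ^ n)
        (Metric.ball (t0 : ℂ) s) := by
      refine Complex.differentiableOn_tsum_of_summable_norm hsum (fun i => ?_)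
        Metric.isOpen_ball ?_
      · fun_prop
      · intro i w hw
        rw [norm_mul, norm_pow, p.norm_apply_eq_norm_coef, Complex.norm_real]
        rw [mem_ball_iff_norm] at hw
        gcongr
    exact this.analyticAt (Metric.ball_mem_nhds _ hs0')
  · filter_upwards [Metric.ball_mem_nhds t0 hs0'] with t ht
    have hmem : t - t0 ∈ Metric.eball (0 : ℝ) r := by
      rw [mem_ball_iff_norm] at ht
      rw [Metric.mem_eball, edist_zero_right]
      refine lt_trans ?_ hsr
      rw [← ofReal_norm, ← ENNReal.ofReal_coe_nnreal]
      exact (ENNReal.ofReal_lt_ofReal_iff hs0').2 ht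
    have h := (hp.hasSum hmem).tsum_eq
    rw [add_sub_cancel] at h
    rw [← h, Complex.ofReal_tsum]
    refine tsum_congr fun n => ?_
    rw [p.apply_eq_pow_smul_coeff]
    push_cast [smul_eq_mul]
    ring

lemma rMu_analyticAt (b : ℝ → ℝ) (μ : Measure ℝ) (tstar : ℝ)
    (hint : (∫⁻ θ, ENNReal.ofReal (Real.exp (-θ ^ 2 / (2 * tstar))) ∂μ) < ⊤)
    (t0 : ℝ) (ht0 : t0 ∈ Set.Ioo 0 tstar) (hb : AnalyticAt ℝ b t0) :
    AnalyticAt ℝ (fun t => (rMu μ t (b t)).toReal) t0 := by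
  obtain ⟨B, hB, hBb⟩ := exists_complex_extension b t0 hb
  have ht0' : (t0 : ℂ) ≠ 0 := by exact_mod_cast ht0.1.ne'
  have hint' : Integrable (fun θ : ℝ => Real.exp (-θ ^ 2 * (1 / (2 * tstar)))) μ := by
    refine ⟨(by fun_prop : Continuous _).aestronglyMeasurable, ?_⟩
    rw [hasFiniteIntegral_iff_ofReal (Eventually.of_forall fun _ => (Real.exp_pos _).le)]
    simpa only [mul_one_div] using hint
  have hu : AnalyticAt ℂ (fun z : ℂ => 1 / (2 * z)) t0 :=
    analyticAt_const.div (analyticAt_const.mul analyticAt_id) (by simpa using ht0')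
  have hv : AnalyticAt ℂ (fun z : ℂ => B z / z) t0 := hB.div analyticAt_id ht0'
  have hre : 1 / (2 * tstar) < ((fun z : ℂ => 1 / (2 * z)) (t0 : ℂ)).re := by
    have : (1 / (2 * (t0 : ℂ))) = ((1 / (2 * t0) : ℝ) : ℂ) := by push_cast; rfl
    show _ < (1 / (2 * (t0 : ℂ))).re
    rw [this, Complex.ofReal_re]
    exact one_div_lt_one_div_of_lt (by linarith [ht0.1]) (by linarith [ht0.2])
  obtain ⟨hA, hI⟩ := analyticAt_integral μ _ hint' _ _ _ hu hv hre
  refine hA.re_ofReal.congr ?_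
  have hI' := Complex.continuous_ofReal.continuousAt.eventually hI
  filter_upwards [hBb, hI'] with t h1 h2
  have hval : ∀ θ : ℝ, Complex.exp (-(θ : ℂ) ^ 2 * (1 / (2 * (t : ℂ))) + θ * (B t / t)) =
      ((rTheta θ t (b t) : ℝ) : ℂ) := by
    intro θ
    rw [h1, rTheta]
    push_cast
    congr 1
    ring
  simp only [hval]
  rw [integral_complex_ofReal, Complex.ofReal_re]
  unfold rMu rTheta
  rw [integral_eq_lintegral_of_nonneg_ae (Eventually.of_forall fun θ => (Real.exp_pos _).le)]
  exact (by fun_prop : Continuous _).aestronglyMeasurable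

theorem stmt_3 (b : ℝ → ℝ) (hba : AnalyticOnNhd ℝ b (Set.Ici 0)) (hb0 : 0 < b 0)
    (μ : Measure ℝ) [SigmaFinite μ]
    (hsupp : μ (Set.Ioi (0 : ℝ))ᶜ = 0)
    (hgap : μ (Set.Ioo 0 (2 * b 0)) = 0)
    (tstar : ℝ) (htstar : 0 < tstar)
    (hint : (∫⁻ θ, ENNReal.ofReal (Real.exp (-θ ^ 2 / (2 * tstar))) ∂μ) < ⊤)
    (ts : ℕ → ℝ) (hts : ∀ n, ts n ∈ Set.Ioi (0 : ℝ)) (hinj : Function.Injective ts)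
    (ttilde : ℝ) (httilde : ttilde ∈ Set.Ioo 0 tstar)
    (hacc : MapClusterPt ttilde atTop ts)
    (hone : ∀ n, rMu μ (ts n) (b (ts n)) = 1) :
    ∀ t ∈ Set.Ioo 0 tstar, rMu μ t (b t) = 1 := by
  have hf : AnalyticOnNhd ℝ (fun t => (rMu μ t (b t)).toReal) (Set.Ioo 0 tstar) := fun t ht =>
    rMu_analyticAt b μ tstar hint t ht (hba t ht.1.le)
  have hfreq : ∃ᶠ t in 𝓝[≠] ttilde, (rMu μ t (b t)).toReal = (fun _ : ℝ => (1 : ℝ)) t := by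
    have h1 : ∃ᶠ t in 𝓝[≠] ttilde, t ∈ Set.range ts := by
      rw [frequently_nhdsWithin_iff, frequently_iff]
      intro U hU
      have h2 := mapClusterPt_iff_frequently.1 hacc U hU
      have h3 : ∀ᶠ n in atTop, ts n ≠ ttilde := by
        by_cases hx : ∃ m, ts m = ttilde
        · obtain ⟨m, hm⟩ := hx
          filter_upwards [eventually_gt_atTop m] with n hn h
          exact hn.ne (hinj (hm.trans h.symm))
        · push Not at hx
          exact Eventually.of_forall hx
      obtain ⟨n, hn1, hn2⟩ := (h2.and_eventually h3).exists
      exact ⟨ts n, hn1, ⟨n, rfl⟩, hn2⟩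
    refine h1.mono ?_
    rintro _ ⟨n, rfl⟩
    simp [hone n]
  have heq := hf.eqOn_of_preconnected_of_frequently_eq analyticOnNhd_const
    isPreconnected_Ioo httilde hfreq
  intro t ht
  exact (ENNReal.toReal_eq_one_iff _).1 (heq ht)
end
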